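/- Let Y_n ⊂ ℝ² be a Π_n-poised set containing a maximal line K = V(k) (k ∈ Π of exact degree 1, #(Y_n ∩ K) = n + 1). Then there exists a vector-space basis h_0, …, h_{n+1} of Π_{n+1} ∩ I(Y_n) that admits a linear syzygy matrix Σ(x) ∈ Π_1^{(n+1)×(n+2)} of rank n + 1 whose last column equals k(x)·e_{n+1}. -/

import Mathlib

open MvPolynomial

noncomputable section

abbrev Pt : Type := Fin 2 → ℝ
abbrev BPoly : Type := MvPolynomial (Fin 2) ℝ

/-- `Π_n`: the space of bivariate polynomials of total degree at most `n`. -/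
def PiLE (n : ℕ) : Submodule ℝ BPoly := MvPolynomial.restrictTotalDegree (Fin 2) ℝ n

/-- The vanishing ideal `I(Y)` of a set `Y ⊆ ℝ²`. -/
def vIdeal (Y : Set Pt) : Ideal BPoly where
  carrier := {p | ∀ y ∈ Y, eval y p = 0}
  add_mem' := by
    intro a b ha hb y hy
    simp [map_add, ha y hy, hb y hy]
  zero_mem' := by intro y hy; simp
  smul_mem' := by
    intro c a ha y hy
    simp [smul_eq_mul, ha y hy]

/-- `I(Y)` as an `ℝ`-subspace of `Π`. -/
def vSub (Y : Set Pt) : Submodule ℝ BPoly := (vIdeal Y).restrictScalars ℝ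

/-- `Y` is `Π_n`-poised: every interpolation problem on `Y` has a unique solution in `Π_n`. -/
def Poised (n : ℕ) (Y : Finset Pt) : Prop :=
  ∀ f : Pt → ℝ, ∃! p : BPoly, p ∈ PiLE n ∧ ∀ y ∈ Y, eval y p = f y

/-- `Y` is `Π_n`-independent: every interpolation problem on `Y` has a solution in `Π_n`. -/
def PIndep (n : ℕ) (Y : Finset Pt) : Prop :=
  ∀ f : Pt → ℝ, ∃ p ∈ PiLE n, ∀ y ∈ Y, eval y p = f y

/-- `ℓ y` is the fundamental (Lagrange) polynomial of `y ∈ Y` in `Π_n`. -/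
def IsFundamental (n : ℕ) (Y : Finset Pt) (ℓ : Pt → BPoly) : Prop :=
  ∀ y ∈ Y, ℓ y ∈ PiLE n ∧ ∀ y' ∈ Y, eval y' (ℓ y) = if y' = y then 1 else 0

/-- A finite family is an H-basis of the ideal `I`. -/
def IsHBasisFam {ι : Type} [Fintype ι] (I : Ideal BPoly) (h : ι → BPoly) : Prop :=
  (∀ i, h i ∈ I) ∧ ∀ f ∈ I, ∃ g : ι → BPoly,
    (∀ i, (g i).totalDegree ≤ f.totalDegree - (h i).totalDegree) ∧ f = ∑ i, g i * h i

/-- A finite set is an H-basis of the ideal `I`. -/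
def IsHBasisSet (I : Ideal BPoly) (H : Finset BPoly) : Prop :=
  (∀ p ∈ H, p ∈ I) ∧ ∀ f ∈ I, ∃ g : BPoly → BPoly,
    (∀ p ∈ H, (g p).totalDegree ≤ f.totalDegree - p.totalDegree) ∧ f = ∑ p ∈ H, g p * p

/-- `M` is a linear syzygy matrix for the family `h`. -/
def IsLinSyz (n : ℕ) (h : Fin (n + 2) → BPoly)
    (M : Matrix (Fin (n + 1)) (Fin (n + 2)) BPoly) : Prop :=
  (∀ i j, M i j ∈ PiLE 1) ∧ ∀ i, ∑ j, M i j * h j = 0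

/-- The rank of a polynomial matrix over the field of rational functions. -/
def ratRank {a b : ℕ} (M : Matrix (Fin a) (Fin b) BPoly) : ℕ :=
  (M.map (algebraMap BPoly (FractionRing BPoly))).rank


/-- Polynomials of total degree strictly less than `m`. -/
def PLT (m : ℕ) : Submodule ℝ BPoly where
  carrier := {p | ∀ s : Fin 2 →₀ ℕ, m ≤ s 0 + s 1 → coeff s p = 0}
  add_mem' := by
    intro a b ha hb s hs
    simp [ha s hs, hb s hs]
  zero_mem' := by intro s hs; simp
  smul_mem' := by
    intro c a ha s hs
    simp [ha s hs]

lemma mem_PLT {m : ℕ} {p : BPoly} :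
    p ∈ PLT m ↔ ∀ s : Fin 2 →₀ ℕ, m ≤ s 0 + s 1 → coeff s p = 0 := Iff.rfl

lemma finsupp_sum_two (s : Fin 2 →₀ ℕ) : (s.sum fun _ e => e) = s 0 + s 1 := by
  rw [Finsupp.sum_fintype _ _ (by simp)]
  simp

lemma mem_PLT_succ {m : ℕ} {p : BPoly} : p ∈ PLT (m + 1) ↔ p.totalDegree ≤ m := by
  rw [mem_PLT, totalDegree, Finset.sup_le_iff]
  constructor
  · intro h s hs
    rw [finsupp_sum_two]
    by_contra hc
    exact (mem_support_iff.1 hs) (h s (by omega))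
  · intro h s hs
    by_contra hc
    have := h s (mem_support_iff.2 hc)
    rw [finsupp_sum_two] at this
    omega

lemma mem_PiLE {m : ℕ} {p : BPoly} : p ∈ PiLE m ↔ p.totalDegree ≤ m :=
  mem_restrictTotalDegree _ _ _

lemma PLT_zero {p : BPoly} (h : p ∈ PLT 0) : p = 0 := by
  ext s
  simpa using h s (Nat.zero_le _)

lemma mem_PLT_iff {m : ℕ} {p : BPoly} : p ∈ PLT m ↔ p = 0 ∨ p.totalDegree < m := by
  cases m with
  | zero =>
    constructor
    · intro h; exact Or.inl (PLT_zero h)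
    · rintro (h | h)
      · rw [h]; exact Submodule.zero_mem _
      · omega
  | succ m =>
    rw [mem_PLT_succ]
    constructor
    · intro h; right; omega
    · rintro (h | h)
      · simp [h]
      · omega

lemma PLT_mono {a b : ℕ} (h : a ≤ b) {p : BPoly} (hp : p ∈ PLT a) : p ∈ PLT b :=
  fun s hs => hp s (h.trans hs)

lemma PLT_mul {m : ℕ} {l p : BPoly} (hl : l.totalDegree ≤ 1) (hp : p ∈ PLT m) :
    l * p ∈ PLT (m + 1) := by
  rw [mem_PLT_iff] at hp
  rcases hp with h | h
  · rw [h, mul_zero]; exact Submodule.zero_mem _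
  · rw [mem_PLT_succ]
    have := totalDegree_mul l p
    omega

lemma PLT_of_mul {m : ℕ} {k q : BPoly} (hk : k.totalDegree = 1) (h : k * q ∈ PLT (m + 1)) :
    q ∈ PLT m := by
  rw [mem_PLT_iff]
  by_cases hq : q = 0
  · exact Or.inl hq
  · right
    have hk0 : k ≠ 0 := by rintro rfl; simp at hk
    rw [mem_PLT_succ, totalDegree_mul_of_isDomain hk0 hq] at h
    omega

/-- The monomial `x^i y^(m-i)`. -/
def mon (m i : ℕ) : BPoly := X 0 ^ i * X 1 ^ (m - i)

lemma coeff_mon (m i : ℕ) (s : Fin 2 →₀ ℕ) :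
    coeff s (mon m i) = if s 0 = i ∧ s 1 = m - i then 1 else 0 := by
  have : mon m i = monomial (Finsupp.single 0 i + Finsupp.single 1 (m - i)) 1 := by
    rw [mon, X_pow_eq_monomial, X_pow_eq_monomial, monomial_mul, one_mul]
  rw [this, coeff_monomial]
  congr 1
  rw [eq_iff_iff]
  constructor
  · rintro rfl; simp
  · rintro ⟨h0, h1⟩
    ext j
    fin_cases j <;> simp [h0, h1]

lemma lead_decomp {m : ℕ} {p : BPoly} (hp : p ∈ PLT (m + 1)) :
    ∃ c : Fin (m + 1) → ℝ, p - ∑ i, c i • mon m i ∈ PLT m := by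
  refine ⟨fun i => coeff (Finsupp.single 0 (i : ℕ) + Finsupp.single 1 (m - i)) p, ?_⟩
  intro s hs
  rw [coeff_sub, coeff_sum]
  simp only [coeff_smul, coeff_mon, smul_eq_mul]
  rcases Nat.lt_or_ge m (s 0 + s 1) with h | h
  · rw [hp s (by omega), Finset.sum_eq_zero, sub_zero]
    intro i _
    rw [if_neg, mul_zero]
    have := i.2
    omega
  · rw [Finset.sum_eq_single (⟨s 0, by omega⟩ : Fin (m + 1))]
    · have e : (Finsupp.single 0 (s 0) + Finsupp.single 1 (m - s 0) : Fin 2 →₀ ℕ) = s := by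
        ext j
        fin_cases j
        · simp
        · simp; omega
      rw [if_pos ⟨rfl, by simp; omega⟩, mul_one]
      simp only [e, sub_self]
    · intro i _ hi
      rw [if_neg, mul_zero]
      rintro ⟨h0, -⟩
      exact hi (Fin.ext h0.symm)
    · simp

lemma lead_indep {m : ℕ} {c : Fin (m + 1) → ℝ} (h : ∑ i, c i • mon m i ∈ PLT m) :
    ∀ i, c i = 0 := by
  intro i
  have := h (Finsupp.single 0 (i : ℕ) + Finsupp.single 1 (m - i)) (by simp; omega)
  rw [coeff_sum] at this
  simp only [coeff_smul, coeff_mon, smul_eq_mul] at this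
  rw [Finset.sum_eq_single i] at this
  · simpa using this
  · intro j _ hj
    rw [if_neg, mul_zero]
    simp
    intro h0
    exact absurd (Fin.ext h0.symm) hj
  · simp

lemma mon_deg {m i : ℕ} (hi : i ≤ m) : mon m i ∈ PLT (m + 1) := by
  intro s hs
  rw [coeff_mon, if_neg]
  omega

lemma line_data_aux (i j : Fin 2) (hij : ∀ m, m = i ∨ m = j) (hne : j ≠ i) (a b c : ℝ) (hc : c ≠ 0)
    (k : BPoly) (hk : k = C a + C c * X i + C b * X j) :
    ∃ (φ : BPoly →ₐ[ℝ] Polynomial ℝ) (u : BPoly), u.totalDegree ≤ 1 ∧ φ u = Polynomial.X ∧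
      φ k = 0 ∧ (∀ p, φ p = 0 → k ∣ p) ∧
      (∀ p m, p.totalDegree ≤ m → (φ p).natDegree ≤ m) ∧
      (∀ y : Pt, eval y k = 0 → ∀ p, (φ p).eval (eval y u) = eval y p) ∧
      (∀ y y' : Pt, eval y k = 0 → eval y' k = 0 → eval y u = eval y' u → y = y') := by
  set f : Fin 2 → Polynomial ℝ := fun m =>
    if m = i then Polynomial.C (-a / c) + Polynomial.C (-b / c) * Polynomial.X else Polynomial.X
    with hf
  have hfi : f i = Polynomial.C (-a / c) + Polynomial.C (-b / c) * Polynomial.X := by simp [hf]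
  have hfj : f j = Polynomial.X := by simp [hf, hne]
  have hyi : ∀ y : Pt, eval y k = 0 → y i = -a / c + -b / c * y j := by
    intro y hy
    rw [hk] at hy
    simp at hy
    field_simp
    linarith
  refine ⟨aeval f, X j, by simp, by simp [hfj], ?_, ?_, ?_, ?_, ?_⟩
  · rw [hk]
    simp only [map_add, map_mul, aeval_X, hfi, hfj, ← algebraMap_eq, AlgHom.commutes]
    simp only [Polynomial.algebraMap_eq]
    rw [mul_add, ← mul_assoc, ← Polynomial.C_mul, ← Polynomial.C_mul,
      mul_div_cancel₀ _ hc, mul_div_cancel₀ _ hc, Polynomial.C_neg, Polynomial.C_neg]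
    ring
  · intro p hp
    have key : (Ideal.Quotient.mkₐ ℝ (Ideal.span {k})).comp
        ((Polynomial.aeval (X j : BPoly)).comp (aeval f)) =
        Ideal.Quotient.mkₐ ℝ (Ideal.span {k}) := by
      apply MvPolynomial.algHom_ext
      intro m
      rcases hij m with rfl | rfl
      · simp only [AlgHom.comp_apply, aeval_X, hfi]
        rw [Ideal.Quotient.mkₐ_eq_mk, Ideal.Quotient.eq, Ideal.mem_span_singleton]
        refine ⟨C (-1 / c), ?_⟩
        rw [hk]
        simp only [map_add, map_mul, Polynomial.aeval_C, Polynomial.aeval_X, algebraMap_eq]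
        have e : (C (-1 / c) * C c : BPoly) = -1 := by
          rw [← C_mul, div_mul_cancel₀ _ hc]; simp
        have e1 : (C (-a / c) : BPoly) = C (-1 / c) * C a := by
          rw [← C_mul]; congr 1; ring
        have e2 : (C (-b / c) : BPoly) = C (-1 / c) * C b := by
          rw [← C_mul]; congr 1; ring
        rw [e1, e2]
        linear_combination (-X m) * e
      · simp [AlgHom.comp_apply, hfj]
    have h := DFunLike.congr_fun key p
    simp only [AlgHom.comp_apply, hp, map_zero] at h
    rw [← Ideal.mem_span_singleton, ← Ideal.Quotient.eq_zero_iff_mem]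
    exact h.symm
  · intro p m hp
    have := MvPolynomial.aeval_natDegree_le p hp f (n := 1) (by
      intro m'
      rcases hij m' with rfl | rfl
      · rw [hfi]; compute_degree
      · rw [hfj]; simp)
    simpa using this
  · intro y hy p
    have key : ((Polynomial.aeval (y j)).comp (aeval f) : BPoly →ₐ[ℝ] ℝ) = aeval y := by
      apply MvPolynomial.algHom_ext
      intro m
      rcases hij m with rfl | rfl
      · simp [hfi, hyi y hy]
      · simp [hfj]
    have h := DFunLike.congr_fun key p
    simpa [Polynomial.coe_aeval_eq_eval] using h
  · intro y y' hy hy' h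
    simp at h
    funext m
    rcases hij m with rfl | rfl
    · rw [hyi y hy, hyi y' hy', h]
    · exact h

lemma line_data (k : BPoly) (hk : k.totalDegree = 1) :
    ∃ (φ : BPoly →ₐ[ℝ] Polynomial ℝ) (u : BPoly), u.totalDegree ≤ 1 ∧ φ u = Polynomial.X ∧
      φ k = 0 ∧ (∀ p, φ p = 0 → k ∣ p) ∧
      (∀ p m, p.totalDegree ≤ m → (φ p).natDegree ≤ m) ∧
      (∀ y : Pt, eval y k = 0 → ∀ p, (φ p).eval (eval y u) = eval y p) ∧
      (∀ y y' : Pt, eval y k = 0 → eval y' k = 0 → eval y u = eval y' u → y = y') := by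
  obtain ⟨c, hc⟩ := lead_decomp (mem_PLT_succ.2 hk.le)
  obtain ⟨d, hd⟩ := lead_decomp hc
  have h0 := PLT_zero hd
  simp [Fin.sum_univ_succ, mon] at h0
  have hk' : k = C (d 0) + C (c 0) * X 1 + C (c 1) * X 0 := by
    have e : (C (d 0) : BPoly) = d 0 • 1 := by rw [smul_eq_C_mul, mul_one]
    rw [e, ← smul_eq_C_mul, ← smul_eq_C_mul]
    linear_combination h0
  by_cases h : c 0 = 0
  · by_cases h1 : c 1 = 0
    · rw [hk', h, h1] at hk
      simp at hk
    · exact line_data_aux 0 1 (by decide) (by decide) (d 0) (c 0) (c 1) h1 k (by rw [hk']; ring)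
  · exact line_data_aux 1 0 (by decide) (by decide) (d 0) (c 1) (c 0) h k hk'

/-- Hilbert-Burch data for a set on which `PLT n` interpolation is uniquely solvable. -/
lemma burch (n : ℕ) (Z : Set Pt)
    (hex : ∀ f : Pt → ℝ, ∃ p ∈ PLT n, ∀ y ∈ Z, eval y p = f y)
    (huniq : ∀ p ∈ PLT n, (∀ y ∈ Z, eval y p = 0) → p = 0) :
    ∃ g : Fin (n + 1) → BPoly, (∀ i, g i ∈ PLT (n + 1)) ∧ (∀ i, ∀ y ∈ Z, eval y (g i) = 0) ∧
      (∀ c : Fin (n + 1) → ℝ, ∑ i, c i • g i = 0 → ∀ i, c i = 0) ∧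
      (∀ p ∈ PLT (n + 1), (∀ y ∈ Z, eval y p = 0) → ∃ c : Fin (n + 1) → ℝ, p = ∑ i, c i • g i) ∧
      (∀ p ∈ PLT (n + 2), (∀ y ∈ Z, eval y p = 0) → ∃ l : Fin (n + 1) → BPoly,
        (∀ i, l i ∈ PiLE 1) ∧ p = ∑ i, l i * g i) ∧
      (∀ i : Fin n, ∃ c : Fin (n + 1) → ℝ,
        X 1 * g i.succ - X 0 * g i.castSucc = ∑ j, c j • g j) := by
  have hg : ∀ i : Fin (n + 1), ∃ g : BPoly, g - mon n i ∈ PLT n ∧ ∀ y ∈ Z, eval y g = 0 := by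
    intro i
    obtain ⟨p, hp, hpy⟩ := hex (fun y => eval y (mon n i))
    refine ⟨mon n i - p, ?_, ?_⟩
    · rw [sub_sub_cancel_left]; exact Submodule.neg_mem _ hp
    · intro y hy; rw [map_sub, hpy y hy, sub_self]
  choose g hg1 hg2 using hg
  have hgdeg : ∀ i, g i ∈ PLT (n + 1) := by
    intro i
    have := Submodule.add_mem _ (PLT_mono (Nat.le_succ n) (hg1 i))
      (mon_deg (m := n) (i := i) (Nat.lt_succ_iff.1 i.2))
    simpa using this
  have hdiff : ∀ c : Fin (n + 1) → ℝ, ∑ i, c i • g i - ∑ i, c i • mon n i ∈ PLT n := by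
    intro c
    rw [← Finset.sum_sub_distrib]
    refine Submodule.sum_mem _ fun i _ => ?_
    rw [← smul_sub]
    exact Submodule.smul_mem _ _ (hg1 i)
  have hspan : ∀ p ∈ PLT (n + 1), (∀ y ∈ Z, eval y p = 0) →
      ∃ c : Fin (n + 1) → ℝ, p = ∑ i, c i • g i := by
    intro p hp hpZ
    obtain ⟨c, hc⟩ := lead_decomp hp
    refine ⟨c, sub_eq_zero.1 (huniq _ ?_ ?_)⟩
    · have := Submodule.sub_mem _ hc (hdiff c)
      convert this using 1
      ring
    · intro y hy
      rw [map_sub, map_sum, hpZ y hy, Finset.sum_eq_zero, sub_zero]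
      intro i _
      rw [smul_eval, hg2 i y hy, mul_zero]
  refine ⟨g, hgdeg, hg2, ?_, hspan, ?_, ?_⟩
  · intro c hc
    apply lead_indep
    have := hdiff c
    rw [hc, zero_sub] at this
    simpa using Submodule.neg_mem _ this
  · intro p hp hpZ
    obtain ⟨c, hc⟩ := lead_decomp hp
    have hX1 : ∀ i : Fin (n + 1), X 1 * g i - mon (n + 1) i ∈ PLT (n + 1) := by
      intro i
      have := PLT_mul (l := X 1) (by simp) (hg1 i)
      convert this using 1
      have e : n + 1 - (i : ℕ) = n - i + 1 := by omega
      rw [mul_sub, mon, mon, e]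
      ring
    have hX0 : X 0 * g (Fin.last n) - mon (n + 1) (n + 1) ∈ PLT (n + 1) := by
      have := PLT_mul (l := X 0) (by simp) (hg1 (Fin.last n))
      convert this using 1
      simp only [mon, Fin.val_last, Nat.sub_self]
      ring
    have hq1 : p - (∑ i : Fin (n + 1), c i.castSucc • (X 1 * g i)
        + c (Fin.last (n + 1)) • (X 0 * g (Fin.last n))) ∈ PLT (n + 1) := by
      rw [Fin.sum_univ_castSucc] at hc
      have h2 : ∑ i : Fin (n + 1), c i.castSucc • (X 1 * g i - mon (n + 1) i) ∈ PLT (n + 1) :=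
        Submodule.sum_mem _ fun i _ => Submodule.smul_mem _ _ (hX1 i)
      have h3 := Submodule.smul_mem _ (c (Fin.last (n + 1))) hX0
      have := Submodule.sub_mem _ (Submodule.sub_mem _ hc h2) h3
      convert this using 1
      simp only [smul_sub, Finset.sum_sub_distrib, Fin.val_last, Fin.val_castSucc]
      ring
    have hq2 : ∀ y ∈ Z, eval y (p - (∑ i : Fin (n + 1), c i.castSucc • (X 1 * g i)
        + c (Fin.last (n + 1)) • (X 0 * g (Fin.last n)))) = 0 := by
      intro y hy
      simp only [map_sub, map_add, map_sum, smul_eval, map_mul, hg2 _ y hy, hpZ y hy]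
      simp
    obtain ⟨d, hd⟩ := hspan _ hq1 hq2
    · refine ⟨fun i => C (c i.castSucc) * X 1 +
        (if i = Fin.last n then C (c (Fin.last (n + 1))) * X 0 else 0) + C (d i), ?_, ?_⟩
      · intro i
        have h1 : ∀ (r : ℝ) (t : Fin 2), C r * X t ∈ PiLE 1 := by
          intro r t
          rw [mem_PiLE]
          refine (totalDegree_mul _ _).trans (by simp)
        refine Submodule.add_mem _ (Submodule.add_mem _ (h1 _ _) ?_) ?_
        · split_ifs
          · exact h1 _ _
          · exact Submodule.zero_mem _
        · rw [mem_PiLE]; simp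
      · rw [sub_eq_iff_eq_add] at hd
        rw [hd]
        simp only [add_mul, Finset.sum_add_distrib, ite_mul, zero_mul, Finset.sum_ite_eq',
          Finset.mem_univ, if_true, smul_eq_C_mul, mul_assoc]
        ring
  · intro i
    apply hspan
    · have h1 := PLT_mul (l := X 1) (by simp) (hg1 i.succ)
      have h0 := PLT_mul (l := X 0) (by simp) (hg1 i.castSucc)
      have := Submodule.sub_mem _ h1 h0
      convert this using 1
      have e : n - (i : ℕ) = n - (i + 1) + 1 := by omega
      simp only [mon, Fin.val_succ, Fin.val_castSucc]
      rw [e]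
      ring
    · intro y hy
      simp [hg2 _ y hy]

lemma det_ne (n : ℕ) (c : Matrix (Fin n) (Fin n) ℝ) (e : Fin n → Fin n → ℝ) :
    (Matrix.of fun i j : Fin n => C (e i j) * X 1 - (if i = j then X 0 else 0) - C (c i j)
      : Matrix (Fin n) (Fin n) BPoly).det ≠ 0 := by
  intro h
  let ψ : BPoly →+* Polynomial ℝ :=
    (aeval (fun t : Fin 2 => if t = 0 then Polynomial.X else (0 : Polynomial ℝ))).toRingHom
  have h1 := congrArg ψ h
  rw [RingHom.map_det, map_zero] at h1
  have h2 : ψ.mapMatrix (Matrix.of fun i j : Fin n =>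
      (C (e i j) * X 1 - (if i = j then X 0 else 0) - C (c i j) : BPoly)) =
      -(Matrix.charmatrix (-c)) := by
    ext1 i j
    have hC : ∀ r, ψ (C r) = Polynomial.C r := fun r => by
      simp [ψ, ← algebraMap_eq]
    have hX0 : ψ (X 0) = Polynomial.X := by simp [ψ]
    have hX1 : ψ (X 1) = 0 := by simp [ψ]
    simp only [RingHom.mapMatrix_apply, Matrix.map_apply, Matrix.of_apply, map_sub, map_mul, hC,
      hX1, mul_zero, Matrix.neg_apply, Matrix.charmatrix_apply, Matrix.diagonal_apply,
      Polynomial.C_neg]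
    split_ifs <;> simp [hX0]
    ring
  rw [h2, Matrix.det_neg] at h1
  have h3 := (Matrix.charpoly_monic (-c)).ne_zero
  rw [Matrix.charpoly] at h3
  rcases mul_eq_zero.1 h1 with h4 | h4
  · exact (pow_ne_zero _ (by simp)) h4
  · exact h3 h4

lemma rank_of_det {a b : ℕ} (M : Matrix (Fin a) (Fin b) BPoly) (f : Fin a → Fin b)
    (h : (M.submatrix id f).det ≠ 0) : ratRank M = a := by
  unfold ratRank
  apply le_antisymm
  · simpa using Matrix.rank_le_card_height (M.map (algebraMap BPoly (FractionRing BPoly)))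
  · set N := M.map (algebraMap BPoly (FractionRing BPoly))
    have hd : (N.submatrix id f).det ≠ 0 := by
      have : N.submatrix id f = (algebraMap BPoly (FractionRing BPoly)).mapMatrix
        (M.submatrix id f) := rfl
      rw [this, ← RingHom.map_det]
      simpa using h
    have hr : (N.submatrix id f).rank = a := by
      rw [Matrix.rank_of_isUnit]
      · simp
      · rw [Matrix.isUnit_iff_isUnit_det]; exact isUnit_iff_ne_zero.2 hd
    exact hr.symm.le.trans (Matrix.rank_submatrix_le N id f)

/-- If a `Π_n`-poised set `Y_n` contains a maximal line
`K = V(k)`, then there is a vector-space basis `h_0, …, h_{n+1}` of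
`Π_{n+1} ∩ I(Y_n)` admitting a rank-`(n+1)` linear syzygy matrix whose last
column equals `k(x)·e_{n+1}`. -/
theorem stmt17 (n : ℕ) (Y : Finset Pt) (hY : Poised n Y)
    (k : BPoly) (hk : k.totalDegree = 1)
    (hmax : ((Y : Set Pt) ∩ {x | eval x k = 0}).ncard = n + 1) :
    ∃ h : Fin (n + 2) → BPoly,
      (∀ i, h i ∈ PiLE (n + 1) ⊓ vSub (Y : Set Pt)) ∧
      LinearIndependent ℝ h ∧
      Submodule.span ℝ (Set.range h) = PiLE (n + 1) ⊓ vSub (Y : Set Pt) ∧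
      ∃ M : Matrix (Fin (n + 1)) (Fin (n + 2)) BPoly,
        IsLinSyz n h M ∧ ratRank M = n + 1 ∧
        ∀ i : Fin (n + 1),
          M i (Fin.last (n + 1)) = if i = Fin.last n then k else 0 := by
  classical
  obtain ⟨φ, u, hu, hφu, hφk, hdvd, hφdeg, hφev, hinj⟩ := line_data k hk
  have hk0 : k ≠ 0 := by rintro rfl; simp at hk
  -- the points on the line
  set T : Finset Pt := Y.filter (fun y => eval y k = 0) with hT
  have hTcard : T.card = n + 1 := by
    rw [← hmax, ← Set.ncard_coe_finset]
    congr 1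
    ext y
    simp [hT]
  have hTY : ∀ y ∈ T, y ∈ Y ∧ eval y k = 0 := fun y hy => by simpa [hT] using hy
  have hline0 : ∀ p : BPoly, (φ p).natDegree ≤ n → (∀ y ∈ T, eval y p = 0) → k ∣ p := by
    intro p hp hpT
    apply hdvd
    apply Polynomial.eq_zero_of_natDegree_lt_card_of_eval_eq_zero' _ (T.image fun y => eval y u)
    · intro t ht
      obtain ⟨y, hy, rfl⟩ := Finset.mem_image.1 ht
      rw [hφev y (hTY y hy).2, hpT y hy]
    · rw [Finset.card_image_of_injOn, hTcard]
      · omega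
      · intro y hy y' hy' h
        exact hinj y y' (hTY y hy).2 (hTY y' hy').2 h
  have hYuniq : ∀ p ∈ PLT (n + 1), (∀ y ∈ Y, eval y p = 0) → p = 0 := by
    intro p hp hpY
    obtain ⟨q, -, hq⟩ := hY (fun _ => 0)
    rw [hq p ⟨mem_PiLE.2 (mem_PLT_succ.1 hp), hpY⟩]
    exact (hq 0 ⟨Submodule.zero_mem _, by simp⟩).symm
  set Z : Set Pt := {y | y ∈ Y ∧ eval y k ≠ 0} with hZ
  have hsplit : ∀ q : BPoly, (∀ y ∈ Z, eval y q = 0) → ∀ y ∈ Y, eval y (k * q) = 0 := by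
    intro q hq y hy
    rw [map_mul]
    by_cases h : eval y k = 0
    · rw [h, zero_mul]
    · rw [hq y ⟨hy, h⟩, mul_zero]
  have hsplit' : ∀ q : BPoly, (∀ y ∈ Y, eval y (k * q) = 0) → ∀ y ∈ Z, eval y q = 0 := by
    intro q hq y hy
    have := hq y hy.1
    rw [map_mul] at this
    exact (mul_eq_zero.1 this).resolve_left hy.2
  obtain ⟨g, hgdeg, hgZ, hgind, hgspan, hglin, hgsyz⟩ := burch n Z (by
    intro f
    obtain ⟨p, ⟨hp, hpY⟩, -⟩ := hY (fun y => eval y k * f y)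
    obtain ⟨q, rfl⟩ := hline0 p (hφdeg p n (mem_PiLE.1 hp)) (by
      intro y hy
      rw [hpY y (hTY y hy).1, (hTY y hy).2, zero_mul])
    refine ⟨q, PLT_of_mul hk (mem_PLT_succ.2 (mem_PiLE.1 hp)), ?_⟩
    intro y hy
    have := hpY y hy.1
    rw [map_mul] at this
    exact mul_left_cancel₀ hy.2 this) (by
    intro q hq hqZ
    have := hYuniq (k * q) (PLT_mul hk.le hq) (hsplit q hqZ)
    exact (mul_eq_zero.1 this).resolve_left hk0)
  -- the extra basis element
  obtain ⟨r, ⟨hr, hrY⟩, -⟩ := hY (fun y => eval y (u ^ (n + 1)))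
  rw [mem_PiLE] at hr
  set w : BPoly := u ^ (n + 1) - r with hw
  have hwdeg : w ∈ PLT (n + 2) := by
    apply Submodule.sub_mem
    · rw [mem_PLT_succ]
      refine (totalDegree_pow _ _).trans ?_
      nlinarith
    · rw [mem_PLT_succ]; omega
  have hwY : ∀ y ∈ Y, eval y w = 0 := by
    intro y hy
    rw [hw, map_sub, hrY y hy, sub_self]
  have hφw : (φ w).coeff (n + 1) = 1 := by
    rw [hw, map_sub, map_pow, hφu, Polynomial.coeff_sub, Polynomial.coeff_X_pow, if_pos rfl,
      Polynomial.coeff_eq_zero_of_natDegree_lt, sub_zero]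
    have := hφdeg r n hr
    omega
  obtain ⟨l, hl, hwl⟩ := hglin w hwdeg (fun y hy => hwY y hy.1)
  choose c hc using hgsyz
  have hmem : ∀ p : BPoly, p ∈ PiLE (n + 1) ⊓ vSub (Y : Set Pt) ↔
      p ∈ PLT (n + 2) ∧ ∀ y ∈ Y, eval y p = 0 := by
    intro p
    rw [Submodule.mem_inf, mem_PiLE, mem_PLT_succ]
    rfl
  set h : Fin (n + 2) → BPoly := Fin.snoc (α := fun _ => BPoly) (fun i => k * g i) w with hh
  have hcast : ∀ i : Fin (n + 1), h i.castSucc = k * g i := fun i => by simp [hh]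
  have hlast : h (Fin.last (n + 1)) = w := by simp [hh]
  have hhmem : ∀ i, h i ∈ PiLE (n + 1) ⊓ vSub (Y : Set Pt) := by
    intro i
    rw [hmem]
    refine Fin.lastCases ?_ (fun i => ?_) i
    · rw [hlast]; exact ⟨hwdeg, hwY⟩
    · rw [hcast]; exact ⟨PLT_mul hk.le (hgdeg i), hsplit _ (hgZ i)⟩
  refine ⟨h, hhmem, ?_, ?_, ?_⟩
  · rw [Fintype.linearIndependent_iff]
    intro d hd
    rw [Fin.sum_univ_castSucc] at hd
    simp only [hcast, hlast] at hd
    have e : ∑ i : Fin (n + 1), d i.castSucc • (k * g i)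
        = k * ∑ i : Fin (n + 1), d i.castSucc • g i := by
      rw [Finset.mul_sum]
      exact Finset.sum_congr rfl fun i _ => (mul_smul_comm _ _ _).symm
    rw [e] at hd
    have hd0 : d (Fin.last (n + 1)) = 0 := by
      have := congrArg (fun q => (φ q).coeff (n + 1)) hd
      simpa [hφk, hφw] using this
    rw [hd0, zero_smul, add_zero] at hd
    have := hgind _ ((mul_eq_zero.1 hd).resolve_left hk0)
    intro i
    exact Fin.lastCases hd0 this i
  · apply le_antisymm
    · rw [Submodule.span_le]
      rintro _ ⟨i, rfl⟩
      exact hhmem i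
    · intro p hp
      rw [hmem] at hp
      obtain ⟨hp1, hp2⟩ := hp
      set t := (φ p).coeff (n + 1)
      have hqdeg : p - t • w ∈ PLT (n + 2) :=
        Submodule.sub_mem _ hp1 (Submodule.smul_mem _ _ hwdeg)
      have hqY : ∀ y ∈ Y, eval y (p - t • w) = 0 := by
        intro y hy
        rw [map_sub, smul_eval, hp2 y hy, hwY y hy]; simp
      have hqφ : (φ (p - t • w)).natDegree ≤ n := by
        have h1 := hφdeg _ _ (mem_PLT_succ.1 hqdeg)
        have h2 : (φ (p - t • w)).coeff (n + 1) = 0 := by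
          simp [hφw, t]
        rw [Polynomial.natDegree_le_iff_coeff_eq_zero]
        intro N hN
        rcases Nat.lt_or_ge (n + 1) N with h3 | h3
        · exact Polynomial.coeff_eq_zero_of_natDegree_lt (by omega)
        · have : N = n + 1 := by omega
          rw [this, h2]
      obtain ⟨q, hq⟩ := hline0 _ hqφ (fun y hy => hqY y (hTY y hy).1)
      rw [hq] at hqdeg hqY
      obtain ⟨d, hd⟩ := hgspan q (PLT_of_mul hk hqdeg) (hsplit' q hqY)
      have hp3 : p = ∑ i, d i • h i.castSucc + t • h (Fin.last (n + 1)) := by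
        rw [hlast, ← sub_eq_iff_eq_add, hq, hd, Finset.mul_sum]
        refine Finset.sum_congr rfl fun i _ => ?_
        rw [hcast, mul_smul_comm]
      rw [hp3]
      refine Submodule.add_mem _ (Submodule.sum_mem _ fun i _ => ?_) ?_
      · exact Submodule.smul_mem _ _ (Submodule.subset_span ⟨_, rfl⟩)
      · exact Submodule.smul_mem _ _ (Submodule.subset_span ⟨_, rfl⟩)
  · let S : Fin n → Fin (n + 1) → BPoly := fun i j =>
      (if j = i.succ then X 1 else 0) - (if j = i.castSucc then X 0 else 0) - C (c i j)
    let M : Matrix (Fin (n + 1)) (Fin (n + 2)) BPoly :=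
      Fin.snoc (α := fun _ => Fin (n + 2) → BPoly)
        (fun i => Fin.snoc (α := fun _ => BPoly) (S i) 0)
        (Fin.snoc (α := fun _ => BPoly) (fun j => - l j) k)
    have hM1 : ∀ i j, M (Fin.castSucc i) (Fin.castSucc j) = S i j := fun i j => by simp [M]
    have hM2 : ∀ i, M (Fin.castSucc i) (Fin.last (n + 1)) = 0 := fun i => by simp [M]
    have hM3 : ∀ j, M (Fin.last n) (Fin.castSucc j) = - l j := fun j => by simp [M]
    have hM4 : M (Fin.last n) (Fin.last (n + 1)) = k := by simp [M]
    have hMcol : ∀ i : Fin (n + 1),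
          M i (Fin.last (n + 1)) = if i = Fin.last n then k else 0 := by
      intro i
      refine Fin.lastCases ?_ (fun i => ?_) i
      · rw [hM4, if_pos rfl]
      · rw [hM2, if_neg (Fin.castSucc_lt_last i).ne]
    refine ⟨M, ⟨?_, ?_⟩, ?_, hMcol⟩
    · intro i j
      have hXm : ∀ (P : Prop) [Decidable P] (t : Fin 2),
          (if P then X t else 0 : BPoly) ∈ PiLE 1 := by
        intro P _ t
        rw [mem_PiLE]
        split_ifs <;> simp
      refine Fin.lastCases ?_ (fun i => ?_) i <;> refine Fin.lastCases ?_ (fun j => ?_) j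
      · rw [hM4, mem_PiLE, hk]
      · rw [hM3]; exact Submodule.neg_mem _ (hl j)
      · rw [hM2]; exact Submodule.zero_mem _
      · rw [hM1]
        refine Submodule.sub_mem _ (Submodule.sub_mem _ (hXm _ _) (hXm _ _)) ?_
        rw [mem_PiLE]; simp
    · intro i
      rw [Fin.sum_univ_castSucc]
      refine Fin.lastCases ?_ (fun i => ?_) i
      · simp only [hM3, hM4, hcast, hlast]
        rw [hwl, Finset.mul_sum, ← Finset.sum_add_distrib]
        exact Finset.sum_eq_zero fun j _ => by ring
      · simp only [hM1, hM2, hcast, hlast, zero_mul, add_zero]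
        have e : ∑ j, S i j * (k * g j) = k * ∑ j, S i j * g j := by
          rw [Finset.mul_sum]
          exact Finset.sum_congr rfl fun j _ => by ring
        rw [e]
        have e2 : ∑ j, S i j * g j = 0 := by
          simp only [S, sub_mul, Finset.sum_sub_distrib, ite_mul, zero_mul, Finset.sum_ite_eq',
            Finset.mem_univ, if_true]
          rw [hc i, sub_eq_zero]
          exact Finset.sum_congr rfl fun j _ => smul_eq_C_mul _ _
        rw [e2, mul_zero]
    · let f : Fin (n + 1) → Fin (n + 2) :=
        Fin.snoc (α := fun _ => Fin (n + 2)) (fun i => i.castSucc.castSucc) (Fin.last (n + 1))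
      have hf1 : ∀ i : Fin n, f i.castSucc = i.castSucc.castSucc := fun i => by simp [f]
      have hf2 : f (Fin.last n) = Fin.last (n + 1) := by simp [f]
      apply rank_of_det M f
      rw [Matrix.det_succ_column _ (Fin.last n), Finset.sum_eq_single (Fin.last n)]
      · apply mul_ne_zero
        · apply mul_ne_zero
          · exact pow_ne_zero _ (by simp)
          · rw [Matrix.submatrix_apply, hf2, id, hM4]; exact hk0
        · convert det_ne n (fun i j => c i j.castSucc)
            (fun i j => if j.castSucc = i.succ then 1 else 0) using 2
          ext1 i j
          simp only [Matrix.submatrix_apply, Matrix.of_apply, id, Fin.succAbove_last, hf1, hM1, S]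
          congr 2
          · split_ifs <;> simp
          · simp only [Fin.castSucc_inj, eq_comm]
      · intro i _ hi
        rw [Matrix.submatrix_apply, hf2, id, hMcol, if_neg hi]
        simp
      · simp
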